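/- Let u ∈ L^∞(ℝ^n × ℝ^m) and let E be the set of x ∈ ℝ^n such that (x,y) is a Lebesgue point of u for almost every y ∈ ℝ^m. Then E has full Lebesgue measure in ℝ^n, and every x ∈ E is a Lebesgue point of the function I_ρ(x) := ∫_{ℝ^m} u(x,y) ρ(y) dy, simultaneously for all ρ ∈ L^1(ℝ^m). -/

import Mathlib

open MeasureTheory Filter

/-- `x` is a Lebesgue point of `f`: averages of `|f - f x|` over balls centered at `x`
shrinking to `x` tend to `0`. -/
def LebesguePoint {E : Type*} [MeasurableSpace E] [PseudoMetricSpace E]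
    (μ : Measure E) (f : E → ℝ) (x : E) : Prop :=
  Filter.Tendsto (fun r : ℝ => ⨍ y in Metric.ball x r, |f y - f x| ∂μ)
    (nhdsWithin 0 (Set.Ioi 0)) (nhds 0)

lemma translation_L1 (m : ℕ) (ρ : (Fin m → ℝ) → ℝ) (hρ : Integrable ρ) :
    Tendsto (fun z : Fin m → ℝ => ∫ y, |ρ (y + z) - ρ y|) (nhds 0) (nhds 0) := by
  have hm : MemLp ρ 1 volume := memLp_one_iff_integrable.2 hρ
  have : Fact ((1 : ENNReal) ≠ ⊤) := ⟨ENNReal.one_ne_top⟩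
  have hc : Continuous (fun z : Fin m → ℝ => (DomAddAct.mk z) +ᵥ (hm.toLp ρ)) := by
    have h1 : Continuous (fun z : Fin m → ℝ => (DomAddAct.mk z)) := DomAddAct.continuous_mk
    exact h1.vadd continuous_const
  have h2 := (hc.tendsto 0).dist (tendsto_const_nhds (x := hm.toLp ρ))
  have h0 : DomAddAct.mk (0 : Fin m → ℝ) +ᵥ hm.toLp ρ = hm.toLp ρ := by
    have : DomAddAct.mk (0 : Fin m → ℝ) = 0 := rfl
    rw [this, zero_vadd]
  rw [h0, dist_self] at h2
  refine h2.congr fun z => ?_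
  rw [dist_eq_norm, L1.norm_eq_integral_norm]
  apply integral_congr_ae
  rw [DomAddAct.mk_vadd_toLp]
  rw [← MemLp.toLp_sub]
  filter_upwards [MemLp.coeFn_toLp ((hm.comp_measurePreserving (measurePreserving_vadd z volume)).sub hm)] with y hy
  refine (congrArg norm hy).trans ?_
  simp [add_comm, Real.norm_eq_abs]

lemma ae_lebesguePoint (n m : ℕ)
    (u : (Fin n → ℝ) × (Fin m → ℝ) → ℝ) (hmeas : Measurable u)
    (M : ℝ) (hbound : ∀ p, |u p| ≤ M) :
    ∀ᵐ p, LebesguePoint volume u p := by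
  have hli : LocallyIntegrable u volume := by
    intro p
    refine ⟨Metric.ball p 1, Metric.ball_mem_nhds _ one_pos, ?_⟩
    exact Measure.integrableOn_of_bounded (M := M) measure_ball_lt_top.ne
      hmeas.aestronglyMeasurable (ae_of_all _ hbound)
  have : (volume : Measure ((Fin n → ℝ) × (Fin m → ℝ))).IsAddHaarMeasure :=
    Measure.prod.instIsAddHaarMeasure (volume : Measure (Fin n → ℝ)) (volume : Measure (Fin m → ℝ))
  filter_upwards [IsUnifLocDoublingMeasure.ae_tendsto_average_norm_sub volume hli 1] with p hp
  have h := hp (l := nhdsWithin (0:ℝ) (Set.Ioi 0)) (fun _ => p) id tendsto_id (by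
    filter_upwards [self_mem_nhdsWithin] with r hr
    exact Metric.mem_closedBall_self (by simpa using le_of_lt hr))
  refine h.congr' ?_
  filter_upwards [self_mem_nhdsWithin] with r hr
  have hs : Metric.closedBall p r =ᵐ[volume] Metric.ball p r := by
    rw [← Metric.ball_union_sphere]
    exact union_ae_eq_left_of_ae_eq_empty
      (ae_eq_empty.2 (Measure.addHaar_sphere_of_ne_zero volume p (ne_of_gt hr)))
  exact setAverage_congr hs

lemma avg_shift (n m : ℕ) (f : (Fin n → ℝ) × (Fin m → ℝ) → ℝ)
    (x : Fin n → ℝ) (y : Fin m → ℝ) (r : ℝ) :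
    ⨍ p in Metric.ball (x, (0 : Fin m → ℝ)) r, f (p.1, y + p.2)
      = ⨍ p in Metric.ball (x, y) r, f p := by
  have : (volume : Measure ((Fin n → ℝ) × (Fin m → ℝ))).IsAddHaarMeasure :=
    Measure.prod.instIsAddHaarMeasure (volume : Measure (Fin n → ℝ)) (volume : Measure (Fin m → ℝ))
  have hmp := measurePreserving_add_left (volume : Measure ((Fin n → ℝ) × (Fin m → ℝ))) (0, y)
  have hpre : (fun p => ((0 : Fin n → ℝ), y) + p) ⁻¹' Metric.ball (x, y) r
      = Metric.ball (x, (0 : Fin m → ℝ)) r := by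
    rw [preimage_add_ball]; simp
  have hv : volume.real (Metric.ball (x, (0 : Fin m → ℝ)) r) = volume.real (Metric.ball (x, y) r) := by
    rw [← hpre]
    exact hmp.measureReal_preimage measurableSet_ball.nullMeasurableSet
  have h := hmp.setIntegral_preimage_emb (measurableEmbedding_addLeft _) f (Metric.ball (x, y) r)
  rw [hpre] at h
  rw [setAverage_eq, setAverage_eq, hv, ← h]
  congr 2
  ext p
  congr 1
  ext <;> simp

lemma avg_fst (n m : ℕ) (g : (Fin n → ℝ) → ℝ) (x : Fin n → ℝ) (r : ℝ) (hr : 0 < r) :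
    ⨍ p in Metric.ball (x, (0 : Fin m → ℝ)) r, g p.1 = ⨍ x' in Metric.ball x r, g x' := by
  rw [setAverage_eq, setAverage_eq, ← ball_prod_same, Measure.volume_eq_prod, ← Measure.prod_restrict,
    integral_fun_fst, measureReal_prod_prod]
  have : volume.real (Metric.ball (0 : Fin m → ℝ) r) ≠ 0 :=
    (ENNReal.toReal_pos (Metric.measure_ball_pos _ _ hr).ne' measure_ball_lt_top.ne).ne'
  simp only [smul_eq_mul, measureReal_restrict_apply_univ]
  field_simp

lemma key_ineq (n m : ℕ)
    (u : (Fin n → ℝ) × (Fin m → ℝ) → ℝ) (hmeas : Measurable u)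
    (M : ℝ) (hbound : ∀ p, |u p| ≤ M) (x : Fin n → ℝ)
    (ρ : (Fin m → ℝ) → ℝ) (hρ : Integrable ρ) (r : ℝ) (hr : 0 < r) (ω : ℝ)
    (hω : ∀ z ∈ Metric.ball (0 : Fin m → ℝ) r, ∫ y, |ρ (y + z) - ρ y| ≤ ω) :
    ⨍ x' in Metric.ball x r, |(∫ y, u (x', y) * ρ y) - ∫ y, u (x, y) * ρ y|
      ≤ M * ω + ∫ y, (⨍ p in Metric.ball (x, y) r, |u p - u (x, y)|) * |ρ y| := by
  have hM : 0 ≤ M := (abs_nonneg _).trans (hbound (x, 0))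
  have hdiff : ∀ p q, |u p - u q| ≤ 2 * M := fun p q => by
    have := abs_sub (u p) (u q)
    linarith [hbound p, hbound q]
  set B := Metric.ball (x, (0 : Fin m → ℝ)) r with hB
  have hBtop : volume B ≠ ⊤ := measure_ball_lt_top.ne
  have hB0 : volume B ≠ 0 := by
    rw [hB, ← ball_prod_same, Measure.volume_eq_prod, Measure.prod_prod]
    exact mul_ne_zero (Metric.measure_ball_pos _ _ hr).ne' (Metric.measure_ball_pos _ _ hr).ne'
  set ν : Measure ((Fin n → ℝ) × (Fin m → ℝ)) := (volume B)⁻¹ • volume.restrict B with hν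
  have : IsProbabilityMeasure ν := ⟨by
    simp [hν, ENNReal.inv_mul_cancel hB0 hBtop]⟩
  let H : (Fin n → ℝ) × (Fin m → ℝ) → (Fin m → ℝ) → ℝ :=
    fun p y => |u (p.1, y + p.2) - u (x, y)| * |ρ y|
  have hH : Integrable (Function.uncurry H) (ν.prod volume) := by
    have h1 : Integrable (fun q : ((Fin n → ℝ) × (Fin m → ℝ)) × (Fin m → ℝ) => |ρ q.2|)
        (ν.prod volume) := hρ.abs.comp_snd ν
    refine h1.bdd_mul (c := 2 * M) ?_ (ae_of_all _ fun q => ?_)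
    · apply Measurable.aestronglyMeasurable
      fun_prop
    · simpa using hdiff _ _
  have hub : ∀ (v : (Fin m → ℝ) → ℝ), Measurable v → (∀ y, |v y| ≤ M) →
      ∀ σ : (Fin m → ℝ) → ℝ, Integrable σ → Integrable (fun y => v y * σ y) := by
    intro v hv hvb σ hσ
    exact hσ.bdd_mul (c := M) hv.aestronglyMeasurable (ae_of_all _ hvb)
  have hpt : ∀ p ∈ B, |(∫ y, u (p.1, y) * ρ y) - ∫ y, u (x, y) * ρ y|
      ≤ M * ω + ∫ y, H p y := by
    intro p hp
    have hp2 : p.2 ∈ Metric.ball (0 : Fin m → ℝ) r := by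
      rw [hB, ← ball_prod_same] at hp
      exact hp.2
    have hshift : (∫ y, u (p.1, y) * ρ y) = ∫ y, u (p.1, y + p.2) * ρ (y + p.2) :=
      (integral_add_right_eq_self (fun y => u (p.1, y) * ρ y) p.2).symm
    have hρs : Integrable (fun y => ρ (y + p.2)) := hρ.comp_add_right p.2
    have hv : Measurable (fun y => u (p.1, y + p.2)) := by fun_prop
    have hw : Measurable (fun y => u (x, y)) := by fun_prop
    have i1 : Integrable (fun y => u (p.1, y + p.2) * (ρ (y + p.2) - ρ y)) :=
      hub _ hv (fun _ => hbound _) _ (hρs.sub hρ)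
    have i2 : Integrable (fun y => (u (p.1, y + p.2) - u (x, y)) * ρ y) := by
      refine hρ.bdd_mul (c := 2 * M) (hv.sub hw).aestronglyMeasurable (ae_of_all _ fun _ => hdiff _ _)
    have e : (∫ y, u (p.1, y) * ρ y) - ∫ y, u (x, y) * ρ y
        = (∫ y, u (p.1, y + p.2) * (ρ (y + p.2) - ρ y))
          + ∫ y, (u (p.1, y + p.2) - u (x, y)) * ρ y := by
      rw [hshift, ← integral_sub (hub _ hv (fun _ => hbound _) _ hρs)
        (hub _ hw (fun _ => hbound _) _ hρ), ← integral_add i1 i2]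
      congr 1
      ext y
      ring
    rw [e]
    refine (abs_add_le _ _).trans (add_le_add ?_ ?_)
    · calc _ ≤ ∫ y, |u (p.1, y + p.2) * (ρ (y + p.2) - ρ y)| := abs_integral_le_integral_abs
        _ ≤ ∫ y, M * |ρ (y + p.2) - ρ y| := by
          refine integral_mono i1.abs ((hρs.sub hρ).abs.const_mul M) fun y => ?_
          simp only [abs_mul]
          exact mul_le_mul_of_nonneg_right (hbound _) (abs_nonneg _)
        _ = M * ∫ y, |ρ (y + p.2) - ρ y| := integral_const_mul _ _
        _ ≤ M * ω := mul_le_mul_of_nonneg_left (hω _ hp2) hM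
    · calc _ ≤ ∫ y, |(u (p.1, y + p.2) - u (x, y)) * ρ y| := abs_integral_le_integral_abs
        _ = ∫ y, H p y := by simp only [abs_mul, H]
  rw [← avg_fst n m (fun x' => |(∫ y, u (x', y) * ρ y) - ∫ y, u (x, y) * ρ y|) x r hr,
    setAverage_eq']
  have hGi : Integrable (fun p => ∫ y, H p y) ν := hH.integral_prod_left
  calc _ ≤ ∫ p, (M * ω + ∫ y, H p y) ∂ν := by
        refine integral_mono_of_nonneg (ae_of_all _ fun _ => abs_nonneg _)
          ((integrable_const _).add hGi) ?_
        refine Measure.ae_smul_measure ?_ _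
        filter_upwards [ae_restrict_mem measurableSet_ball] with p hp using hpt p hp
    _ = M * ω + ∫ p, (∫ y, H p y) ∂ν := by
        rw [integral_add (integrable_const _) hGi]; simp
    _ = M * ω + ∫ y, (∫ p, H p y ∂ν) := by rw [integral_integral_swap hH]
    _ = _ := by
        congr 2
        ext y
        rw [← avg_shift n m (fun p => |u p - u (x, y)|) x y r, setAverage_eq']
        simp only [H]
        rw [integral_mul_const]

lemma avg_meas (n m : ℕ)
    (u : (Fin n → ℝ) × (Fin m → ℝ) → ℝ) (hmeas : Measurable u) (x : Fin n → ℝ) (r : ℝ) :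
    StronglyMeasurable (fun y => ⨍ p in Metric.ball (x, y) r, |u p - u (x, y)|) := by
  have : (fun y : Fin m → ℝ => ⨍ p in Metric.ball (x, y) r, |u p - u (x, y)|)
      = fun y => ⨍ p in Metric.ball (x, (0 : Fin m → ℝ)) r, |u (p.1, y + p.2) - u (x, y)| := by
    ext y
    rw [← avg_shift n m (fun p => |u p - u (x, y)|) x y r]
  rw [this]
  simp only [setAverage_eq, smul_eq_mul]
  refine Measurable.stronglyMeasurable (Measurable.const_mul (StronglyMeasurable.measurable ?_) _)
  apply StronglyMeasurable.integral_prod_right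
  apply Measurable.stronglyMeasurable
  unfold Function.uncurry
  fun_prop

theorem lebesgue_points_of_averages (n m : ℕ)
    (u : (Fin n → ℝ) × (Fin m → ℝ) → ℝ) (hmeas : Measurable u)
    (M : ℝ) (hbound : ∀ p, |u p| ≤ M)
    (E : Set (Fin n → ℝ))
    (hE : E = {x | ∀ᵐ y : Fin m → ℝ, LebesguePoint volume u (x, y)}) :
    volume Eᶜ = 0 ∧
      ∀ x ∈ E, ∀ ρ : (Fin m → ℝ) → ℝ, Integrable ρ →
        LebesguePoint volume (fun x' => ∫ y, u (x', y) * ρ y) x := by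
  subst hE
  refine ⟨Measure.ae_ae_of_ae_prod (ae_lebesguePoint n m u hmeas M hbound), ?_⟩
  intro x hx ρ hρ
  have hM : 0 ≤ M := (abs_nonneg _).trans (hbound (x, 0))
  have hdiff : ∀ p q, |u p - u q| ≤ 2 * M := fun p q => by
    have := abs_sub (u p) (u q)
    linarith [hbound p, hbound q]
  have hlim : Tendsto (fun r : ℝ => ∫ y, (⨍ p in Metric.ball (x, y) r, |u p - u (x, y)|) * |ρ y|)
      (nhdsWithin 0 (Set.Ioi 0)) (nhds 0) := by
    have h0 : (0 : ℝ) = ∫ y : Fin m → ℝ, (0 : ℝ) := by simp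
    rw [h0]
    refine tendsto_integral_filter_of_dominated_convergence (fun y => 2 * M * |ρ y|) ?_ ?_
      (hρ.abs.const_mul _) ?_
    · exact Eventually.of_forall fun r =>
        (avg_meas n m u hmeas x r).aestronglyMeasurable.mul hρ.abs.aestronglyMeasurable
    · refine Eventually.of_forall fun r => ae_of_all _ fun y => ?_
      rw [norm_mul, Real.norm_eq_abs |ρ y|, abs_abs]
      refine mul_le_mul_of_nonneg_right ?_ (abs_nonneg _)
      rw [setAverage_eq, norm_smul, norm_inv, Real.norm_of_nonneg measureReal_nonneg]
      have := norm_setIntegral_le_of_norm_le_const (μ := volume) (s := Metric.ball (x, y) r)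
        (f := fun p => |u p - u (x, y)|) (C := 2 * M) measure_ball_lt_top
        (fun p _ => by simpa using hdiff _ _)
      refine (mul_le_mul_of_nonneg_left this (by positivity)).trans ?_
      rcases eq_or_ne (volume.real (Metric.ball (x, y) r)) 0 with h | h
      · rw [h]; simp [hM]
      · apply le_of_eq; field_simp
    · filter_upwards [hx] with y hy
      simpa using Tendsto.mul_const (|ρ y|) hy
  have htr := translation_L1 m ρ hρ
  unfold LebesguePoint
  rw [Metric.tendsto_nhds]
  intro ε hε
  have hδ : 0 < ε / (2 * (M + 1)) := by positivity
  obtain ⟨R, hR, hRω⟩ := Metric.eventually_nhds_iff_ball.1 (htr.eventually (gt_mem_nhds hδ))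
  filter_upwards [self_mem_nhdsWithin, hlim.eventually (gt_mem_nhds (half_pos hε)),
    mem_nhdsWithin_of_mem_nhds (gt_mem_nhds hR)] with r hr0 hr1 hr2
  have hk := key_ineq n m u hmeas M hbound x ρ hρ r hr0 (ε / (2 * (M + 1)))
    (fun z hz => (hRω z (Metric.ball_subset_ball (le_of_lt hr2) hz)).le)
  have hMe : M * (ε / (2 * (M + 1))) ≤ ε / 2 := by
    have : (M + 1) * (ε / (2 * (M + 1))) = ε / 2 := by field_simp
    nlinarith
  rw [Real.dist_eq, sub_zero, abs_of_nonneg]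
  · linarith
  · exact integral_nonneg fun _ => abs_nonneg _
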